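/- For every α > 0, the function A ↦ Λ(α,A) is non-decreasing and continuous on [0, |Ω|]. -/

import Mathlib

open MeasureTheory ENNReal

noncomputable section

/-- The Euclidean Laplacian `Δu` of a function `u : ℝⁿ → ℝ`. -/
def lap {n : ℕ} (u : EuclideanSpace ℝ (Fin n) → ℝ) (x : EuclideanSpace ℝ (Fin n)) : ℝ :=
  ∑ i : Fin n, iteratedFDeriv ℝ 2 u x ![EuclideanSpace.single i 1, EuclideanSpace.single i 1]

/-- Smooth compactly supported test functions on `Ω`, not identically zero. -/
def TestFun {n : ℕ} (Ω : Set (EuclideanSpace ℝ (Fin n)))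
    (u : EuclideanSpace ℝ (Fin n) → ℝ) : Prop :=
  ContDiff ℝ (⊤ : ℕ∞) u ∧ HasCompactSupport u ∧ tsupport u ⊆ Ω ∧ u ≠ 0

/-- The generalized composite plate eigenvalue
`Λ(α,A) = inf_S inf_u (∫_Ω (Δu)² + α ∫_S u²) / ∫_Ω u²`,
the infima being over measurable `S ⊆ Ω` with `|S| = A` and over smooth compactly
supported `u : Ω → ℝ`, `u ≢ 0`. -/
def Lam {n : ℕ} (Ω : Set (EuclideanSpace ℝ (Fin n))) (α A : ℝ) : ℝ :=
  sInf { r : ℝ | ∃ S : Set (EuclideanSpace ℝ (Fin n)), MeasurableSet S ∧ S ⊆ Ω ∧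
      volume S = ENNReal.ofReal A ∧
      ∃ u : EuclideanSpace ℝ (Fin n) → ℝ, TestFun Ω u ∧
        r = ((∫ x in Ω, lap u x ^ 2) + α * ∫ x in S, u x ^ 2) / ∫ x in Ω, u x ^ 2 }

/-!
For `A ≤ B`, every `S` with `|S| = B` contains a subset of measure `A`; passing to it only lowers
the Rayleigh quotient, so `Λ(α, ·)` is monotone. Conversely, every `S` with `|S| = A` can be
enlarged by a disjoint `T` with `|T| = B - A`, which raises the quotient by `α ∫_T u² / ∫_Ω u²`.
The Gagliardo–Nirenberg–Sobolev inequality for `u²` and the identity `∫ |∇u|² = -∫ u Δu` give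
`∫_T u² ≤ C |T|^{1/n} (∫ u² + ∫ (Δu)²)` with `C` depending only on `n`, so that
`Λ(α,B) ≤ Λ(α,A) + α C (B - A)^{1/n} (1 + Λ(α,A))`: the eigenvalue is Hölder continuous in `A`
with exponent `1/n`.
-/

open Set Filter Module
open scoped NNReal Topology Laplacian

section PrescribedMeasure

lemma continuous_measureReal_Iic (ν : Measure ℝ) [IsFiniteMeasure ν] [NullSingletonClass ν] :
    Continuous fun t ↦ ν.real (Iic t) := by
  have hprimitive : Continuous fun t ↦ ν.real (Iic 0) + ∫ _ in (0 : ℝ)..t, (1 : ℝ) ∂ν :=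
    continuous_const.add
      (intervalIntegral.continuous_primitive (fun _ _ ↦ intervalIntegrable_const) 0)
  refine hprimitive.congr fun t ↦ ?_
  rw [← intervalIntegral.integral_Iic_sub_Iic integrableOn_const integrableOn_const]
  simp

variable {X : Type*} [MeasurableSpace X] {μ : Measure X}

lemma exists_measurable_subset_measure_eq {f : X → ℝ} (hf : Measurable f)
    (hfibre : ∀ t, μ (f ⁻¹' {t}) = 0) {S : Set X} (hS : MeasurableSet S) (hSfin : μ S ≠ ∞)
    {b : ℝ≥0∞} (hb : b ≤ μ S) : ∃ T ⊆ S, MeasurableSet T ∧ μ T = b := by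
  rcases eq_zero_or_pos b with rfl | hb_pos
  · exact ⟨∅, empty_subset S, .empty, measure_empty⟩
  rcases hb.eq_or_lt with rfl | hb_lt
  · exact ⟨S, subset_rfl, hS, rfl⟩
  have : IsFiniteMeasure (μ.restrict S) := isFiniteMeasure_restrict.2 hSfin
  set ν : Measure ℝ := (μ.restrict S).map f
  have hν (t : ℝ) : ν (Iic t) = μ (f ⁻¹' Iic t ∩ S) := by
    rw [Measure.map_apply hf measurableSet_Iic,
      Measure.restrict_apply (hf measurableSet_Iic)]
  have : NullSingletonClass ν := ⟨fun t ↦ by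
    rw [Measure.map_apply hf (measurableSet_singleton t)]
    exact Measure.restrict_le_self.absolutelyContinuous (hfibre t)⟩
  have hcont : Continuous fun t ↦ ν (Iic t) := by
    simpa [Function.comp_def] using
      ENNReal.continuous_ofReal.comp (continuous_measureReal_Iic ν)
  have hbot : Tendsto (fun t ↦ ν (Iic t)) atBot (𝓝 0) := by
    simpa [iInter_Iic_eq_empty_iff.2, not_bddBelow_univ] using!
      tendsto_measure_iInter_atBot (μ := ν) (s := Iic)
        (fun _ ↦ measurableSet_Iic.nullMeasurableSet) monotone_Iic ⟨0, measure_ne_top ν _⟩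
  have htop : Tendsto (fun t ↦ ν (Iic t)) atTop (𝓝 (μ S)) := by
    simpa [ν, Measure.map_apply hf] using tendsto_measure_Iic_atTop ν
  obtain ⟨t, -, ht⟩ := isPreconnected_univ.intermediate_value_Ioo (by simp) (by simp)
    hcont.continuousOn hbot htop ⟨hb_pos, hb_lt⟩
  exact ⟨f ⁻¹' Iic t ∩ S, inter_subset_right, (hf measurableSet_Iic).inter hS, (hν t).symm.trans ht⟩

end PrescribedMeasure

section Square

lemma hasCompactSupport_sq {X : Type*} [TopologicalSpace X] {f : X → ℝ}
    (hf : HasCompactSupport f) : HasCompactSupport fun x ↦ f x ^ 2 := by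
  simpa only [sq] using! hf.mul_left

lemma integrable_sq_of_hasCompactSupport {X : Type*} [TopologicalSpace X] [MeasurableSpace X]
    [OpensMeasurableSpace X] {μ : Measure X} [IsFiniteMeasureOnCompacts μ] {f : X → ℝ}
    (hf : Continuous f) (hfsupp : HasCompactSupport f) : Integrable (fun x ↦ f x ^ 2) μ :=
  (hf.pow 2).integrable_of_hasCompactSupport (hasCompactSupport_sq hfsupp)

lemma norm_fderiv_fun_sq_le {E : Type*} [NormedAddCommGroup E] [NormedSpace ℝ E] {u : E → ℝ} {x : E}
    (hu : DifferentiableAt ℝ u x) :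
    ‖fderiv ℝ (fun y ↦ u y ^ 2) x‖ ≤ u x ^ 2 + ‖fderiv ℝ u x‖ ^ 2 := by
  have := two_mul_le_add_sq |u x| ‖fderiv ℝ u x‖
  simpa [fderiv_fun_pow 2 hu, norm_smul] using this

end Square

section Sobolev

variable {E F : Type*} [NormedAddCommGroup E] [NormedSpace ℝ E] [FiniteDimensional ℝ E]
  [MeasurableSpace E] [BorelSpace E] (μ : Measure E) [μ.IsAddHaarMeasure]
  [NormedAddCommGroup F] [NormedSpace ℝ F]

/-- Gagliardo–Nirenberg–Sobolev bounds the norm in `L^{d/(d-1)}`, where `d = dim E`; Hölder's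
inequality on `T` then leaves the factor `|T|^{1 - (d-1)/d}`. -/
lemma exists_eLpNorm_restrict_le_eLpNorm_fderiv (hE : 1 < finrank ℝ E) :
    ∃ C : ℝ≥0, ∀ v : E → F, ContDiff ℝ 1 v → HasCompactSupport v → ∀ T : Set E,
      eLpNorm v 1 (μ.restrict T) ≤
        C * eLpNorm (fderiv ℝ v) 1 μ * μ T ^ (finrank ℝ E : ℝ)⁻¹ := by
  obtain ⟨p, hp⟩ : ∃ p : ℝ≥0, NNReal.HolderConjugate (finrank ℝ E) p :=
    ⟨_, .conjExponent (mod_cast hE)⟩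
  have hexp : (1 : ℝ≥0∞).toReal⁻¹ - (p : ℝ≥0∞).toReal⁻¹ = (finrank ℝ E : ℝ)⁻¹ := by
    simpa using hp.coe.symm.one_sub_inv
  refine ⟨eLpNormLESNormFDerivOneConst μ p, fun v hv hvsupp T ↦ ?_⟩
  calc eLpNorm v 1 (μ.restrict T)
      ≤ eLpNorm v p (μ.restrict T) * μ T ^ (finrank ℝ E : ℝ)⁻¹ := by
        have := eLpNorm_le_eLpNorm_mul_rpow_measure_univ (μ := μ.restrict T)
          (ENNReal.one_le_coe_iff.2 hp.symm.lt.le) hv.continuous.aestronglyMeasurable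
        rwa [Measure.restrict_apply_univ, one_div, one_div, hexp] at this
    _ ≤ eLpNorm v p μ * μ T ^ (finrank ℝ E : ℝ)⁻¹ := by
        gcongr
        exact Measure.restrict_le_self
    _ ≤ _ := by
        gcongr
        exact eLpNorm_le_eLpNorm_fderiv_one μ hv hvsupp hp

lemma exists_setIntegral_norm_le_integral_norm_fderiv (hE : 1 < finrank ℝ E) :
    ∃ C : ℝ≥0, ∀ v : E → F, ContDiff ℝ 1 v → HasCompactSupport v → ∀ T : Set E, μ T ≠ ∞ →
      ∫ x in T, ‖v x‖ ∂μ ≤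
        C * μ.real T ^ (finrank ℝ E : ℝ)⁻¹ * ∫ x, ‖fderiv ℝ v x‖ ∂μ := by
  obtain ⟨C, hC⟩ := exists_eLpNorm_restrict_le_eLpNorm_fderiv (F := F) μ hE
  refine ⟨C, fun v hv hvsupp T hT ↦ ?_⟩
  have hint : Integrable v μ := hv.continuous.integrable_of_hasCompactSupport hvsupp
  have hint' : Integrable (fderiv ℝ v) μ :=
    (hv.continuous_fderiv one_ne_zero).integrable_of_hasCompactSupport (hvsupp.fderiv ℝ)
  rw [← ENNReal.ofReal_le_ofReal_iff (by positivity), ENNReal.ofReal_mul (by positivity),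
    ENNReal.ofReal_mul C.coe_nonneg, ← ENNReal.ofReal_rpow_of_nonneg measureReal_nonneg
    (by positivity), ofReal_measureReal hT, ENNReal.ofReal_coe_nnreal,
    ofReal_integral_norm_eq_lintegral_enorm hint.restrict,
    ofReal_integral_norm_eq_lintegral_enorm hint', ← eLpNorm_one_eq_lintegral_enorm,
    ← eLpNorm_one_eq_lintegral_enorm, mul_right_comm]
  exact hC v hv hvsupp T

end Sobolev

section Laplacian

variable {E F : Type*} [NormedAddCommGroup E] [InnerProductSpace ℝ E] [FiniteDimensional ℝ E]
  [NormedAddCommGroup F] [NormedSpace ℝ F]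

lemma continuous_laplacian {u : E → F} (hu : ContDiff ℝ 2 u) : Continuous (Δ u) := by
  rw [InnerProductSpace.laplacian_eq_iteratedFDeriv_stdOrthonormalBasis]
  have := hu.continuous_iteratedFDeriv (m := 2) le_rfl
  fun_prop

lemma tsupport_laplacian_subset (u : E → F) : tsupport (Δ u) ⊆ tsupport u := by
  refine closure_minimal (fun x hx ↦ ?_) (isClosed_tsupport u)
  contrapose! hx
  have : iteratedFDeriv ℝ 2 u x = 0 := by
    by_contra h
    exact hx (tsupport_iteratedFDeriv_subset 2 (subset_tsupport _ h))
  simp [InnerProductSpace.laplacian_eq_iteratedFDeriv_stdOrthonormalBasis, this]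

lemma hasCompactSupport_laplacian {u : E → F} (hu : HasCompactSupport u) :
    HasCompactSupport (Δ u) :=
  hu.of_isClosed_subset (isClosed_tsupport _) (tsupport_laplacian_subset u)

lemma laplacian_eq_sum_fderiv_fderiv {ι : Type*} [Fintype ι] (b : OrthonormalBasis ι ℝ E)
    {u : E → F} (hu : ContDiff ℝ 2 u) (x : E) :
    Δ u x = ∑ i, fderiv ℝ (fun y ↦ fderiv ℝ u y (b i)) x (b i) := by
  rw [InnerProductSpace.laplacian_eq_iteratedFDeriv_orthonormalBasis u b]
  refine Finset.sum_congr rfl fun i _ ↦ ?_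
  have : DifferentiableAt ℝ (fderiv ℝ u) x :=
    (hu.fderiv_right (m := 1) le_rfl).differentiable one_ne_zero x
  rw [iteratedFDeriv_two_apply, fderiv_clm_apply this (differentiableAt_const _)]
  simp

variable [MeasurableSpace E] [BorelSpace E] (μ : Measure E) [μ.IsAddHaarMeasure] {u : E → ℝ}

lemma integral_mul_fderiv_fderiv_self (hu : ContDiff ℝ 2 u) (husupp : HasCompactSupport u) (v : E) :
    ∫ x, u x * fderiv ℝ (fun y ↦ fderiv ℝ u y v) x v ∂μ = -∫ x, fderiv ℝ u x v ^ 2 ∂μ := by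
  have hDu : ContDiff ℝ 1 fun x ↦ fderiv ℝ u x v :=
    (hu.fderiv_right (m := 1) le_rfl).clm_apply contDiff_const
  have hDDu : Continuous fun x ↦ fderiv ℝ (fun y ↦ fderiv ℝ u y v) x v :=
    (hDu.continuous_fderiv one_ne_zero).clm_apply continuous_const
  have hDusupp : HasCompactSupport fun x ↦ fderiv ℝ u x v := husupp.fderiv_apply ℝ v
  simp only [sq]
  refine integral_mul_fderiv_eq_neg_fderiv_mul_of_integrable ?_ ?_ ?_
    (fun x _ ↦ hu.differentiable two_ne_zero x) fun x _ ↦ hDu.differentiable one_ne_zero x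
  · exact (hDu.continuous.mul hDu.continuous).integrable_of_hasCompactSupport hDusupp.mul_right
  · exact (hu.continuous.mul hDDu).integrable_of_hasCompactSupport husupp.mul_right
  · exact (hu.continuous.mul hDu.continuous).integrable_of_hasCompactSupport husupp.mul_right

lemma integral_norm_fderiv_sq_eq (hu : ContDiff ℝ 2 u) (husupp : HasCompactSupport u) :
    ∫ x, ‖fderiv ℝ u x‖ ^ 2 ∂μ = -∫ x, u x * Δ u x ∂μ := by
  let b := stdOrthonormalBasis ℝ E
  have hDu (v : E) : ContDiff ℝ 1 fun x ↦ fderiv ℝ u x v :=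
    (hu.fderiv_right (m := 1) le_rfl).clm_apply contDiff_const
  have hint_sq (v : E) : Integrable (fun x ↦ fderiv ℝ u x v ^ 2) μ :=
    integrable_sq_of_hasCompactSupport (hDu v).continuous (husupp.fderiv_apply ℝ v)
  have hint_mul (v : E) :
      Integrable (fun x ↦ u x * fderiv ℝ (fun y ↦ fderiv ℝ u y v) x v) μ :=
    (hu.continuous.mul (((hDu v).continuous_fderiv one_ne_zero).clm_apply
      continuous_const)).integrable_of_hasCompactSupport husupp.mul_right
  simp only [b.norm_dual, laplacian_eq_sum_fderiv_fderiv b hu, Finset.mul_sum]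
  rw [integral_finsetSum _ fun i _ ↦ hint_sq (b i), integral_finsetSum _ fun i _ ↦ hint_mul (b i)]
  simp only [integral_mul_fderiv_fderiv_self μ hu husupp, Finset.sum_neg_distrib, neg_neg]

lemma integral_norm_fderiv_sq_le (hu : ContDiff ℝ 2 u) (husupp : HasCompactSupport u) :
    ∫ x, ‖fderiv ℝ u x‖ ^ 2 ∂μ ≤ ((∫ x, u x ^ 2 ∂μ) + ∫ x, Δ u x ^ 2 ∂μ) / 2 := by
  have hint_u := integrable_sq_of_hasCompactSupport (μ := μ) hu.continuous husupp
  have hint_lap := integrable_sq_of_hasCompactSupport (μ := μ) (continuous_laplacian hu)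
    (hasCompactSupport_laplacian husupp)
  rw [integral_norm_fderiv_sq_eq μ hu husupp, ← integral_neg, ← integral_add hint_u hint_lap,
    ← integral_div]
  refine integral_mono ?_ ((hint_u.add hint_lap).div_const 2) fun x ↦ ?_
  · exact ((hu.continuous.mul (continuous_laplacian hu)).integrable_of_hasCompactSupport
      husupp.mul_right).neg
  · have := sq_nonneg (u x + Δ u x)
    simp only
    linarith

lemma integral_norm_fderiv_fun_sq_le (hu : ContDiff ℝ 2 u) (husupp : HasCompactSupport u) :
    ∫ x, ‖fderiv ℝ (fun y ↦ u y ^ 2) x‖ ∂μ ≤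
      2 * ((∫ x, u x ^ 2 ∂μ) + ∫ x, Δ u x ^ 2 ∂μ) := by
  have hint_u := integrable_sq_of_hasCompactSupport (μ := μ) hu.continuous husupp
  have hint_fderiv : Integrable (fun x ↦ ‖fderiv ℝ u x‖ ^ 2) μ :=
    integrable_sq_of_hasCompactSupport (hu.continuous_fderiv two_ne_zero).norm
      (husupp.fderiv ℝ).norm
  calc ∫ x, ‖fderiv ℝ (fun y ↦ u y ^ 2) x‖ ∂μ
      ≤ ∫ x, (u x ^ 2 + ‖fderiv ℝ u x‖ ^ 2) ∂μ :=
        integral_mono_of_nonneg (.of_forall fun x ↦ norm_nonneg _) (hint_u.add hint_fderiv)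
          (.of_forall fun x ↦ norm_fderiv_fun_sq_le (hu.differentiable two_ne_zero x))
    _ = (∫ x, u x ^ 2 ∂μ) + ∫ x, ‖fderiv ℝ u x‖ ^ 2 ∂μ := integral_add hint_u hint_fderiv
    _ ≤ 2 * ((∫ x, u x ^ 2 ∂μ) + ∫ x, Δ u x ^ 2 ∂μ) := by
        have : 0 ≤ ∫ x, u x ^ 2 ∂μ := by positivity
        have : 0 ≤ ∫ x, Δ u x ^ 2 ∂μ := by positivity
        linarith [integral_norm_fderiv_sq_le μ hu husupp]

lemma exists_setIntegral_sq_le (hE : 1 < finrank ℝ E) :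
    ∃ C : ℝ≥0, ∀ u : E → ℝ, ContDiff ℝ 2 u → HasCompactSupport u → ∀ T : Set E, μ T ≠ ∞ →
      ∫ x in T, u x ^ 2 ∂μ ≤
        C * μ.real T ^ (finrank ℝ E : ℝ)⁻¹ * ((∫ x, u x ^ 2 ∂μ) + ∫ x, Δ u x ^ 2 ∂μ) := by
  obtain ⟨C, hC⟩ := exists_setIntegral_norm_le_integral_norm_fderiv (F := ℝ) μ hE
  refine ⟨C * 2, fun u hu husupp T hT ↦ ?_⟩
  calc ∫ x in T, u x ^ 2 ∂μ
      = ∫ x in T, ‖u x ^ 2‖ ∂μ := by simp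
    _ ≤ C * μ.real T ^ (finrank ℝ E : ℝ)⁻¹ * ∫ x, ‖fderiv ℝ (fun y ↦ u y ^ 2) x‖ ∂μ :=
        hC _ ((hu.of_le one_le_two).pow 2) (hasCompactSupport_sq husupp) T hT
    _ ≤ C * μ.real T ^ (finrank ℝ E : ℝ)⁻¹ *
          (2 * ((∫ x, u x ^ 2 ∂μ) + ∫ x, Δ u x ^ 2 ∂μ)) := by
        gcongr
        exact integral_norm_fderiv_fun_sq_le μ hu husupp
    _ = _ := by push_cast; ring

end Laplacian

lemma holderOnWith_of_monotoneOn {f : ℝ → ℝ} {s : Set ℝ} {C r : ℝ≥0} (hf : MonotoneOn f s)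
    (hsub : ∀ x ∈ s, ∀ y ∈ s, x ≤ y → f y - f x ≤ C * (y - x) ^ (r : ℝ)) :
    HolderOnWith C r f s := by
  intro x hx y hy
  wlog hxy : x ≤ y generalizing x y
  · rw [edist_comm, edist_comm x]
    exact this y hy x hx (le_of_not_ge hxy)
  rw [edist_comm, edist_comm x, edist_dist, edist_dist, Real.dist_eq, Real.dist_eq,
    abs_of_nonneg (sub_nonneg.2 (hf hx hy hxy)), abs_of_nonneg (sub_nonneg.2 hxy),
    ENNReal.ofReal_rpow_of_nonneg (sub_nonneg.2 hxy) r.coe_nonneg, ← ENNReal.ofReal_coe_nnreal,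
    ← ENNReal.ofReal_mul C.coe_nonneg]
  exact ENNReal.ofReal_le_ofReal (hsub x hx y hy hxy)

section Plate

variable {n : ℕ} {Ω S T : Set (EuclideanSpace ℝ (Fin n))} {α A : ℝ}
  {u : EuclideanSpace ℝ (Fin n) → ℝ}

lemma lap_eq_laplacian (u : EuclideanSpace ℝ (Fin n) → ℝ) : lap u = Δ u := by
  ext x
  simp [InnerProductSpace.laplacian_eq_iteratedFDeriv_orthonormalBasis u
    (EuclideanSpace.basisFun (Fin n) ℝ), lap]

lemma exists_testFun (hΩ : IsOpen Ω) (hne : Ω.Nonempty) : ∃ u, TestFun Ω u := by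
  obtain ⟨x, hx⟩ := hne
  obtain ⟨u, hsub, hsupp, hsmooth, -, hux⟩ :=
    exists_contDiff_tsupport_subset (n := ⊤) (hΩ.mem_nhds hx)
  exact ⟨u, hsmooth, hsupp, hsub, fun h ↦ by simp [h] at hux⟩

lemma TestFun.contDiff_two (hu : TestFun Ω u) : ContDiff ℝ 2 u :=
  hu.1.of_le (WithTop.coe_le_coe.2 le_top)

lemma TestFun.integrable_sq (hu : TestFun Ω u) : Integrable fun x ↦ u x ^ 2 :=
  integrable_sq_of_hasCompactSupport hu.1.continuous hu.2.1

lemma TestFun.setIntegral_sq (hu : TestFun Ω u) : ∫ x in Ω, u x ^ 2 = ∫ x, u x ^ 2 :=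
  setIntegral_eq_integral_of_forall_compl_eq_zero fun x hx ↦ by
    simp [image_eq_zero_of_notMem_tsupport fun h ↦ hx (hu.2.2.1 h)]

lemma TestFun.setIntegral_lap_sq (hu : TestFun Ω u) :
    ∫ x in Ω, lap u x ^ 2 = ∫ x, Δ u x ^ 2 := by
  rw [lap_eq_laplacian]
  exact setIntegral_eq_integral_of_forall_compl_eq_zero fun x hx ↦ by
    simp [image_eq_zero_of_notMem_tsupport fun h ↦ hx (hu.2.2.1 (tsupport_laplacian_subset u h))]

lemma TestFun.setIntegral_sq_pos (hu : TestFun Ω u) : 0 < ∫ x in Ω, u x ^ 2 := by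
  obtain ⟨x, hx⟩ := Function.ne_iff.1 hu.2.2.2
  rw [hu.setIntegral_sq]
  exact (hu.1.continuous.pow 2).integral_pos_of_hasCompactSupport_nonneg_nonzero
    (hasCompactSupport_sq hu.2.1) (fun y ↦ sq_nonneg (u y)) (pow_ne_zero 2 hx)

/-- The Rayleigh quotient `(∫_Ω (Δu)² + α ∫_S u²) / ∫_Ω u²` of the composite plate whose denser
part occupies `S`; `Lam Ω α A` is its infimum over `|S| = A` and test functions `u`. -/
def plateQuotient (Ω : Set (EuclideanSpace ℝ (Fin n))) (α : ℝ)
    (S : Set (EuclideanSpace ℝ (Fin n))) (u : EuclideanSpace ℝ (Fin n) → ℝ) : ℝ :=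
  ((∫ x in Ω, lap u x ^ 2) + α * ∫ x in S, u x ^ 2) / ∫ x in Ω, u x ^ 2

lemma plateQuotient_nonneg (hα : 0 ≤ α) : 0 ≤ plateQuotient Ω α S u := by
  unfold plateQuotient
  positivity

lemma plateQuotient_mono (hα : 0 ≤ α) (hu : TestFun Ω u) (hST : S ⊆ T) :
    plateQuotient Ω α S u ≤ plateQuotient Ω α T u := by
  unfold plateQuotient
  gcongr ((_ + α * ?_) / _)
  exact setIntegral_mono_set hu.integrable_sq.integrableOn (.of_forall fun x ↦ sq_nonneg (u x))
    hST.eventuallyLE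

lemma plateQuotient_union_le (hα : 0 ≤ α) (hu : TestFun Ω u) (hST : Disjoint S T)
    (hT : MeasurableSet T) {K : ℝ} (hK : 0 ≤ K)
    (huT : ∫ x in T, u x ^ 2 ≤ K * ((∫ x in Ω, u x ^ 2) + ∫ x in Ω, lap u x ^ 2)) :
    plateQuotient Ω α (S ∪ T) u ≤
      plateQuotient Ω α S u + α * K * (1 + plateQuotient Ω α S u) := by
  have hU := hu.setIntegral_sq_pos
  have hlap : (∫ x in Ω, lap u x ^ 2) / ∫ x in Ω, u x ^ 2 ≤ plateQuotient Ω α S u := by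
    unfold plateQuotient
    gcongr
    exact le_add_of_nonneg_right (by positivity)
  calc plateQuotient Ω α (S ∪ T) u
      = plateQuotient Ω α S u + α * ((∫ x in T, u x ^ 2) / ∫ x in Ω, u x ^ 2) := by
        unfold plateQuotient
        rw [setIntegral_union hST hT hu.integrable_sq.integrableOn hu.integrable_sq.integrableOn]
        ring
    _ ≤ plateQuotient Ω α S u +
          α * (K * (1 + (∫ x in Ω, lap u x ^ 2) / ∫ x in Ω, u x ^ 2)) := by
        gcongr
        rwa [one_add_div hU.ne', ← mul_div_assoc, div_le_div_iff_of_pos_right hU]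
    _ ≤ plateQuotient Ω α S u + α * K * (1 + plateQuotient Ω α S u) := by
        rw [mul_assoc]
        gcongr

lemma exists_measurable_subset_volume_eq [NeZero n] (hS : MeasurableSet S) (hSfin : volume S ≠ ∞)
    {b : ℝ≥0∞} (hb : b ≤ volume S) : ∃ T ⊆ S, MeasurableSet T ∧ volume T = b :=
  exists_measurable_subset_measure_eq measurable_norm
    (fun t ↦ by
      simpa [Metric.sphere, preimage] using
        Measure.addHaar_sphere volume (0 : EuclideanSpace ℝ (Fin n)) t) hS hSfin hb

lemma Lam_le_plateQuotient (hα : 0 ≤ α) (hS : MeasurableSet S) (hSΩ : S ⊆ Ω)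
    (hSA : volume S = ENNReal.ofReal A) (hu : TestFun Ω u) :
    Lam Ω α A ≤ plateQuotient Ω α S u := by
  refine csInf_le ⟨0, ?_⟩ ⟨S, hS, hSΩ, hSA, u, hu, rfl⟩
  rintro _ ⟨S, -, -, -, u, -, rfl⟩
  exact plateQuotient_nonneg hα

lemma le_Lam [NeZero n] (hΩ : IsOpen Ω) (hne : Ω.Nonempty) (hΩfin : volume Ω ≠ ∞)
    (hA : A ≤ (volume Ω).toReal) {c : ℝ}
    (hc : ∀ S, MeasurableSet S → S ⊆ Ω → volume S = ENNReal.ofReal A →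
      ∀ u, TestFun Ω u → c ≤ plateQuotient Ω α S u) :
    c ≤ Lam Ω α A := by
  obtain ⟨u, hu⟩ := exists_testFun hΩ hne
  obtain ⟨S, hSΩ, hS, hSA⟩ := exists_measurable_subset_volume_eq hΩ.measurableSet hΩfin
    (ENNReal.ofReal_le_of_le_toReal hA)
  refine le_csInf ⟨_, S, hS, hSΩ, hSA, u, hu, rfl⟩ ?_
  rintro _ ⟨S, hS, hSΩ, hSA, u, hu, rfl⟩
  exact hc S hS hSΩ hSA u hu

lemma monotoneOn_Lam [NeZero n] (hΩ : IsOpen Ω) (hne : Ω.Nonempty) (hΩfin : volume Ω ≠ ∞)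
    (hα : 0 ≤ α) : MonotoneOn (Lam Ω α) (Icc 0 (volume Ω).toReal) := by
  intro A _ B hB hAB
  refine le_Lam hΩ hne hΩfin hB.2 fun S hS hSΩ hSB u hu ↦ ?_
  obtain ⟨T, hTS, hT, hTA⟩ := exists_measurable_subset_volume_eq hS
    (measure_ne_top_of_subset hSΩ hΩfin) (hSB ▸ ENNReal.ofReal_le_ofReal hAB)
  exact (Lam_le_plateQuotient hα hT (hTS.trans hSΩ) hTA hu).trans (plateQuotient_mono hα hu hTS)

lemma exists_disjoint_subset_volume_eq [NeZero n] (hΩ : MeasurableSet Ω) (hΩfin : volume Ω ≠ ∞)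
    (hS : MeasurableSet S) (hSΩ : S ⊆ Ω) {B : ℝ} (hA : 0 ≤ A) (hSA : volume S = ENNReal.ofReal A)
    (hB : B ≤ (volume Ω).toReal) :
    ∃ T ⊆ Ω, MeasurableSet T ∧ Disjoint S T ∧ volume T = ENNReal.ofReal (B - A) := by
  have hle : ENNReal.ofReal (B - A) ≤ volume (Ω \ S) := by
    rw [measure_sdiff hSΩ hS.nullMeasurableSet (measure_ne_top_of_subset hSΩ hΩfin), hSA,
      ENNReal.ofReal_sub B hA]
    gcongr
    exact ENNReal.ofReal_le_of_le_toReal hB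
  obtain ⟨T, hTsub, hT, hTvol⟩ := exists_measurable_subset_volume_eq (hΩ.diff hS)
    (measure_ne_top_of_subset sdiff_subset hΩfin) hle
  exact ⟨T, hTsub.trans sdiff_subset, hT, disjoint_sdiff_right.mono_right hTsub, hTvol⟩

lemma exists_Lam_le_add_rpow (hn : 2 ≤ n) (hΩ : IsOpen Ω) (hne : Ω.Nonempty)
    (hΩfin : volume Ω ≠ ∞) (hα : 0 ≤ α) :
    ∃ C : ℝ≥0, ∀ A B, 0 ≤ A → A ≤ B → B ≤ (volume Ω).toReal →
      Lam Ω α B ≤ Lam Ω α A + α * (C * (B - A) ^ (n : ℝ)⁻¹) * (1 + Lam Ω α A) := by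
  have : NeZero n := ⟨by omega⟩
  obtain ⟨C, hC⟩ := exists_setIntegral_sq_le (E := EuclideanSpace ℝ (Fin n)) volume (by simpa)
  rw [finrank_euclideanSpace_fin] at hC
  refine ⟨C, fun A B hA hAB hB ↦ ?_⟩
  set K := C * (B - A) ^ (n : ℝ)⁻¹
  have hK : 0 ≤ K := mul_nonneg C.coe_nonneg (Real.rpow_nonneg (sub_nonneg.2 hAB) _)
  have hαK : 0 < 1 + α * K := by positivity
  suffices (Lam Ω α B - α * K) / (1 + α * K) ≤ Lam Ω α A by
    rw [div_le_iff₀ hαK] at this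
    linarith
  refine le_Lam hΩ hne hΩfin (hAB.trans hB) fun S hS hSΩ hSA u hu ↦ ?_
  obtain ⟨T, hTΩ, hT, hST, hTvol⟩ :=
    exists_disjoint_subset_volume_eq hΩ.measurableSet hΩfin hS hSΩ hA hSA hB
  have hvol : volume (S ∪ T) = ENNReal.ofReal B := by
    rw [measure_union hST hT, hSA, hTvol, ← ENNReal.ofReal_add hA (sub_nonneg.2 hAB),
      add_sub_cancel]
  have huT : ∫ x in T, u x ^ 2 ≤ K * ((∫ x in Ω, u x ^ 2) + ∫ x in Ω, lap u x ^ 2) := by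
    have h := hC u hu.contDiff_two hu.2.1 T (measure_ne_top_of_subset hTΩ hΩfin)
    rwa [measureReal_def, hTvol, ENNReal.toReal_ofReal (sub_nonneg.2 hAB),
      ← hu.setIntegral_sq, ← hu.setIntegral_lap_sq] at h
  have hB_le := (Lam_le_plateQuotient hα (hS.union hT) (union_subset hSΩ hTΩ) hvol hu).trans
    (plateQuotient_union_le hα hu hST hT hK huT)
  rw [div_le_iff₀ hαK]
  linarith

lemma exists_holderOnWith_Lam (hn : 2 ≤ n) (hΩ : IsOpen Ω) (hne : Ω.Nonempty)
    (hΩfin : volume Ω ≠ ∞) (hα : 0 ≤ α) :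
    ∃ C : ℝ≥0, HolderOnWith C (n : ℝ≥0)⁻¹ (Lam Ω α) (Icc 0 (volume Ω).toReal) := by
  have : NeZero n := ⟨by omega⟩
  have hmono := monotoneOn_Lam hΩ hne hΩfin hα
  obtain ⟨C, hC⟩ := exists_Lam_le_add_rpow hn hΩ hne hΩfin hα
  refine ⟨(α * C * (1 + Lam Ω α (volume Ω).toReal)).toNNReal,
    holderOnWith_of_monotoneOn hmono fun A hA B hB hAB ↦ ?_⟩
  have : 0 ≤ B - A := sub_nonneg.2 hAB
  have hmax : Lam Ω α A ≤ Lam Ω α (volume Ω).toReal :=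
    hmono hA (right_mem_Icc.2 ENNReal.toReal_nonneg) hA.2
  calc Lam Ω α B - Lam Ω α A
      ≤ α * (C * (B - A) ^ (n : ℝ)⁻¹) * (1 + Lam Ω α A) :=
        sub_le_iff_le_add'.2 (hC A B hA.1 hAB hB.2)
    _ ≤ α * (C * (B - A) ^ (n : ℝ)⁻¹) * (1 + Lam Ω α (volume Ω).toReal) := by gcongr
    _ = α * C * (1 + Lam Ω α (volume Ω).toReal) * (B - A) ^ (n : ℝ)⁻¹ := by ring
    _ ≤ _ := by
        push_cast
        gcongr
        exact Real.le_coe_toNNReal _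

end Plate

theorem statement8_general {n : ℕ} (hn : 2 ≤ n) (Ω : Set (EuclideanSpace ℝ (Fin n)))
    (hne : Ω.Nonempty) (hΩo : IsOpen Ω) (hΩfin : volume Ω ≠ ∞) (α : ℝ) (hα : 0 ≤ α) :
    MonotoneOn (Lam Ω α) (Icc 0 (volume Ω).toReal) ∧
    ∃ C : ℝ≥0, HolderOnWith C (n : ℝ≥0)⁻¹ (Lam Ω α) (Icc 0 (volume Ω).toReal) := by
  have : NeZero n := ⟨by omega⟩
  exact ⟨monotoneOn_Lam hΩo hne hΩfin hα, exists_holderOnWith_Lam hn hΩo hne hΩfin hα⟩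

/-- For every `α > 0`, the map `A ↦ Λ(α,A)` is non-decreasing and continuous on `[0,|Ω|]`. -/
theorem statement8 {n : ℕ} (hn : 2 ≤ n) (Ω : Set (EuclideanSpace ℝ (Fin n)))
    (hne : Ω.Nonempty) (hΩo : IsOpen Ω) (hΩb : Bornology.IsBounded Ω)
    (α : ℝ) (hα : 0 < α) :
    MonotoneOn (fun A => Lam Ω α A) (Set.Icc (0 : ℝ) (volume Ω).toReal) ∧
    ContinuousOn (fun A => Lam Ω α A) (Set.Icc (0 : ℝ) (volume Ω).toReal) := by
  obtain ⟨hmono, C, hholder⟩ :=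
    statement8_general hn Ω hne hΩo hΩb.measure_lt_top.ne α hα.le
  exact ⟨hmono, hholder.continuousOn (inv_pos.2 (mod_cast by omega))⟩
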